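/- Let A = (Q, Σ, δ) be a partial DFA with |Q| ≥ 2 and fix a state t ∈ Q. Let q⊖, r be fresh states and, for every q ∈ Q ∪ {r}, let q̂ be a further fresh state (all added states pairwise distinct and not in Q). Define the complete DFA A'' over the state set Q'' = Q ∪ {q⊖, r} ∪ {q̂ : q ∈ Q ∪ {r}} by: δ''(q, a) = δ(q, a) for q ∈ Q, a ∈ Σ whenever δ(q, a) is defined; δ''(q, a) = q⊖ for q ∈ Q, a ∈ Σ whenever δ(q, a) is undefined; δ''(q⊖, a) = δ''(r, a) = δ''(t, a) for every a ∈ Σ (that is, both equal δ(t, a) if it is defined and q⊖ otherwise); and δ''(q̂, a) = q for every q ∈ Q ∪ {r} and every a ∈ Σ. Then A admits a carefully synchronizing word if and only if there exists a word w ∈ Σ* that synchronizes A'' and satisfies (q⊖, r) ∈ ℛ^{ℓ<ℓ}(w) with respect to A''. -/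

import Mathlib

/-- Extension of the (total) transition function `δ` to words. -/
def dStar {Q A : Type*} (δ : Q → A → Q) (q : Q) (w : List A) : Q :=
  w.foldl δ q

/-- A word `w` synchronizes the complete DFA `δ`. -/
def Synchronizes {Q A : Type*} (δ : Q → A → Q) (w : List A) : Prop :=
  ∃ q0 : Q, ∀ q : Q, dStar δ q w = q0

/-- Extension of the partial transition function `δ` to words. -/
def pStar {Q A : Type*} (δ : Q → A → Option Q) (q : Q) (w : List A) : Option Q :=
  w.foldl (fun o a => o.bind fun p => δ p a) (some q)

/-- A word `w` carefully synchronizes the partial DFA `δ`. -/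
def CarefullySync {Q A : Type*} (δ : Q → A → Option Q) (w : List A) : Prop :=
  ∃ q0 : Q, ∀ q : Q, pStar δ q w = some q0

/-- `last(p, w, Q)`: the largest `i ≤ |w|` with `p ∈ δ(Q, w[1..i])`,
or `⊥ = -∞` if there is none. -/
def lastVisitSet {Q A : Type*} [Fintype Q] [DecidableEq Q] (δ : Q → A → Q)
    (w : List A) (p : Q) : WithBot ℕ :=
  ((Finset.range (w.length + 1)).filter
    (fun i => ∃ q : Q, dStar δ q (w.take i) = p)).max

/-- The traversal relation `ℛ^{ℓ<ℓ}(w)` ("ℓ < ℓ on sets"). -/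
def RelLtLtSets {Q A : Type*} [Fintype Q] [DecidableEq Q] (δ : Q → A → Q)
    (w : List A) : Set (Q × Q) :=
  {pq | pq.1 ≠ pq.2 ∧ lastVisitSet δ w pq.1 < lastVisitSet δ w pq.2}

/-- The completion of the partial DFA `δ` (as for `ℛ^{ℓ≤ℓ}`): states are
`Q ⊕ Bool`, where `Sum.inr false` is `q⊖` and `Sum.inr true` is `r`. -/
def extDelta {Q A : Type*} (δ : Q → A → Option Q) (t : Q) :
    Q ⊕ Bool → A → Q ⊕ Bool :=
  fun s a =>
    match s with
    | Sum.inl q => (δ q a).elim (Sum.inr false) Sum.inl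
    | Sum.inr _ => (δ t a).elim (Sum.inr false) Sum.inl

/-- The DFA `A''`: in addition to the states of `A'` (embedded via
`Sum.inl`), for every `q ∈ Q ∪ {r}` there is a fresh copy `q̂`
(`Sum.inr (Sum.inl q)` for `q ∈ Q`, and `Sum.inr (Sum.inr ())` for `r̂`),
and every letter sends `q̂` to `q`. -/
def extDelta2 {Q A : Type*} (δ : Q → A → Option Q) (t : Q) :
    (Q ⊕ Bool) ⊕ (Q ⊕ Unit) → A → (Q ⊕ Bool) ⊕ (Q ⊕ Unit) :=
  fun s a =>
    match s with
    | Sum.inl b => Sum.inl (extDelta δ t b a)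
    | Sum.inr (Sum.inl q) => Sum.inl (Sum.inl q)
    | Sum.inr (Sum.inr _) => Sum.inl (Sum.inr true)

theorem pStar_none {Q A : Type*} (δ : Q → A → Option Q) (w : List A) :
    w.foldl (fun o a => o.bind fun p => δ p a) (none : Option Q) = none := by
  induction w with
  | nil => rfl
  | cons a w ih => simpa using ih

theorem pStar_cons_none {Q A : Type*} (δ : Q → A → Option Q) (q : Q) (a : A) (w : List A)
    (h : δ q a = none) : pStar δ q (a :: w) = none := by
  have := pStar_none δ w
  simpa [pStar, h] using this

theorem pStar_cons_some {Q A : Type*} (δ : Q → A → Option Q) (q p : Q) (a : A) (w : List A)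
    (h : δ q a = some p) : pStar δ q (a :: w) = pStar δ p w := by
  simp [pStar, h]

theorem dStar_cons {Q A : Type*} (δ : Q → A → Q) (q : Q) (a : A) (w : List A) :
    dStar δ q (a :: w) = dStar δ (δ q a) w := rfl

theorem ext2_some {Q A : Type*} (δ : Q → A → Option Q) (t q p : Q) (a : A)
    (h : δ q a = some p) :
    extDelta2 δ t (Sum.inl (Sum.inl q)) a = Sum.inl (Sum.inl p) := by
  simp [extDelta2, extDelta, h]

theorem ext2_none {Q A : Type*} (δ : Q → A → Option Q) (t q : Q) (a : A)
    (h : δ q a = none) :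
    extDelta2 δ t (Sum.inl (Sum.inl q)) a = Sum.inl (Sum.inr false) := by
  simp [extDelta2, extDelta, h]

theorem dStar_of_pStar {Q A : Type*} (δ : Q → A → Option Q) (t : Q) (w : List A) :
    ∀ q p : Q, pStar δ q w = some p →
      dStar (extDelta2 δ t) (Sum.inl (Sum.inl q)) w = Sum.inl (Sum.inl p) := by
  induction w with
  | nil => intro q p h; simp [pStar] at h; simp [dStar, h]
  | cons a w ih =>
    intro q p h
    cases hd : δ q a with
    | none => rw [pStar_cons_none δ q a w hd] at h; cases h
    | some q' =>
      rw [pStar_cons_some δ q q' a w hd] at h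
      rw [dStar_cons, ext2_some δ t q q' a hd]
      exact ih q' p h

theorem take_of_pStar {Q A : Type*} (δ : Q → A → Option Q) (w : List A) :
    ∀ q p : Q, pStar δ q w = some p → ∀ i, ∃ p', pStar δ q (w.take i) = some p' := by
  induction w with
  | nil => intro q p h i; exact ⟨q, by simp [pStar]⟩
  | cons a w ih =>
    intro q p h i
    cases i with
    | zero => exact ⟨q, by simp [pStar]⟩
    | succ i =>
      cases hd : δ q a with
      | none => rw [pStar_cons_none δ q a w hd] at h; cases h
      | some q' =>
        rw [pStar_cons_some δ q q' a w hd] at h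
        rw [List.take_succ_cons, pStar_cons_some δ q q' a _ hd]
        exact ih q' p h i

theorem pStar_of_avoid {Q A : Type*} (δ : Q → A → Option Q) (t : Q) (w : List A) :
    ∀ q : Q, (∀ i ≤ w.length, dStar (extDelta2 δ t) (Sum.inl (Sum.inl q)) (w.take i) ≠
      Sum.inl (Sum.inr false)) → ∃ p, pStar δ q w = some p := by
  induction w with
  | nil => intro q _; exact ⟨q, rfl⟩
  | cons a w ih =>
    intro q h
    cases hd : δ q a with
    | none =>
      exfalso
      apply h 1 (by simp)
      simpa [dStar] using ext2_none δ t q a hd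
    | some q' =>
      rw [pStar_cons_some δ q q' a w hd]
      apply ih
      intro i hi
      have := h (i+1) (by simpa using hi)
      rwa [List.take_succ_cons, dStar_cons, ext2_some δ t q q' a hd] at this

theorem ext2_inl {Q A : Type*} (δ : Q → A → Option Q) (t : Q) (s) (a : A) :
    ∃ b, extDelta2 δ t s a = Sum.inl b := by
  rcases s with b | q | u <;> exact ⟨_, rfl⟩

theorem ext2_inl_ne {Q A : Type*} (δ : Q → A → Option Q) (t : Q) (b : Q ⊕ Bool) (a : A) :
    extDelta2 δ t (Sum.inl b) a ≠ Sum.inl (Sum.inr true) := by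
  rcases b with q | c
  · cases h : δ q a <;> simp [extDelta2, extDelta, h]
  · cases h : δ t a <;> simp [extDelta2, extDelta, h]

theorem dStar_inl_ne {Q A : Type*} (δ : Q → A → Option Q) (t : Q) (w : List A) :
    ∀ (b : Q ⊕ Bool), w ≠ [] → dStar (extDelta2 δ t) (Sum.inl b) w ≠ Sum.inl (Sum.inr true) := by
  induction w with
  | nil => intro b h; exact absurd rfl h
  | cons a w ih =>
    intro b _
    rw [dStar_cons]
    by_cases hw : w = []
    · subst hw; exact ext2_inl_ne δ t b a
    · obtain ⟨b', hb⟩ := ext2_inl δ t (Sum.inl b) a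
      rw [hb]; exact ih b' hw

theorem carefullySync_iff_sync_relLtLtSets {Q A : Type*} [Fintype Q]
    [DecidableEq Q] (hQ : 2 ≤ Fintype.card Q)
    (δ : Q → A → Option Q) (t : Q) :
    (∃ w : List A, CarefullySync δ w) ↔
      ∃ w : List A, Synchronizes (extDelta2 δ t) w ∧
        ((Sum.inl (Sum.inr false), Sum.inl (Sum.inr true)) :
            ((Q ⊕ Bool) ⊕ (Q ⊕ Unit)) × ((Q ⊕ Bool) ⊕ (Q ⊕ Unit))) ∈
          RelLtLtSets (extDelta2 δ t) w := by
  constructor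
  · rintro ⟨w, q0, hw⟩
    cases w with
    | nil =>
      exfalso
      have : Fintype.card Q ≤ 1 := Fintype.card_le_one_iff.2 fun x y => by
        have hx := hw x
        have hy := hw y
        simp [pStar] at hx hy
        rw [hx, hy]
      omega
    | cons a u =>
      have hdef : ∀ q, ∃ p, δ q a = some p := by
        intro q
        cases hd : δ q a with
        | none => have := hw q; rw [pStar_cons_none δ q a u hd] at this; cases this
        | some p => exact ⟨p, rfl⟩
      have hr : ∀ v, dStar (extDelta2 δ t) (Sum.inl (Sum.inr true)) (a :: v) =
          dStar (extDelta2 δ t) (Sum.inl (Sum.inl t)) (a :: v) := fun v => rfl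
      have hstep : ∀ s, (∃ p, extDelta2 δ t s a = Sum.inl (Sum.inl p)) ∨
          extDelta2 δ t s a = Sum.inl (Sum.inr true) := by
        rintro ((q | c) | q | c)
        · obtain ⟨p, hp⟩ := hdef q
          exact Or.inl ⟨p, ext2_some δ t q p a hp⟩
        · obtain ⟨p, hp⟩ := hdef t
          exact Or.inl ⟨p, ext2_some δ t t p a hp⟩
        · exact Or.inl ⟨q, rfl⟩
        · exact Or.inr rfl
      refine ⟨a :: a :: u, ⟨Sum.inl (Sum.inl q0), ?_⟩, by simp, ?_⟩
      · intro s
        rw [dStar_cons]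
        rcases hstep s with ⟨p, hp⟩ | hp
        · rw [hp]; exact dStar_of_pStar δ t _ _ _ (hw p)
        · rw [hp, hr]; exact dStar_of_pStar δ t _ _ _ (hw t)
      · have h1 : lastVisitSet (extDelta2 δ t) (a :: a :: u) (Sum.inl (Sum.inr false)) ≤
            ((0 : ℕ) : WithBot ℕ) := by
          unfold lastVisitSet
          apply Finset.max_le
          intro i hi
          rw [Finset.mem_filter] at hi
          obtain ⟨_, s, hs⟩ := hi
          cases i with
          | zero => exact le_rfl
          | succ i =>
            exfalso
            rw [List.take_succ_cons, dStar_cons] at hs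
            have key : ∀ q, dStar (extDelta2 δ t) (Sum.inl (Sum.inl q)) ((a :: u).take i) ≠
                Sum.inl (Sum.inr false) := by
              intro q hq
              obtain ⟨p', hp'⟩ := take_of_pStar δ _ _ _ (hw q) i
              rw [dStar_of_pStar δ t _ _ _ hp'] at hq
              simp at hq
            rcases hstep s with ⟨p, hp⟩ | hp
            · rw [hp] at hs; exact key p hs
            · rw [hp] at hs
              cases i with
              | zero => simp [dStar] at hs
              | succ i => exact key t hs
        have h2 : ((1 : ℕ) : WithBot ℕ) ≤
            lastVisitSet (extDelta2 δ t) (a :: a :: u) (Sum.inl (Sum.inr true)) := by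
          unfold lastVisitSet
          apply Finset.le_max
          rw [Finset.mem_filter]
          exact ⟨by simp, Sum.inr (Sum.inr ()), rfl⟩
        exact lt_of_le_of_lt h1 (lt_of_lt_of_le (by exact_mod_cast Nat.zero_lt_one) h2)
  · rintro ⟨w, ⟨s0, hs⟩, -, hlt⟩
    cases w with
    | nil =>
      exfalso
      have h1 := hs (Sum.inl (Sum.inr false))
      have h2 := hs (Sum.inl (Sum.inr true))
      rw [← h2] at h1
      simp [dStar] at h1
    | cons a u =>
      have h1 : lastVisitSet (extDelta2 δ t) (a :: u) (Sum.inl (Sum.inr true)) ≤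
          ((1 : ℕ) : WithBot ℕ) := by
        unfold lastVisitSet
        apply Finset.max_le
        intro i hi
        rw [Finset.mem_filter, Finset.mem_range] at hi
        obtain ⟨hi, s, hs⟩ := hi
        by_contra hcon
        have hi2 : 1 < i := by
          by_contra h
          exact hcon (WithBot.coe_le_coe.2 (Nat.le_of_not_lt h))
        obtain ⟨j, rfl⟩ : ∃ j, i = j + 2 := ⟨i - 2, by omega⟩
        rw [List.take_succ_cons, dStar_cons] at hs
        obtain ⟨b, hb⟩ := ext2_inl δ t s a
        rw [hb] at hs
        refine dStar_inl_ne δ t _ b ?_ hs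
        cases u with
        | nil => simp at hi
        | cons c u => simp
      have h2 : ∀ q i, i ≤ u.length → dStar (extDelta2 δ t) (Sum.inl (Sum.inl q)) (u.take i) ≠
          Sum.inl (Sum.inr false) := by
        intro q i hi hq
        have h3 : ((i + 1 : ℕ) : WithBot ℕ) ≤
            lastVisitSet (extDelta2 δ t) (a :: u) (Sum.inl (Sum.inr false)) := by
          unfold lastVisitSet
          apply Finset.le_max
          rw [Finset.mem_filter, Finset.mem_range]
          refine ⟨by simp; omega, Sum.inr (Sum.inl q), ?_⟩
          change dStar (extDelta2 δ t) (Sum.inr (Sum.inl q)) (List.take (i + 1) (a :: u)) = _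
          rw [List.take_succ_cons, dStar_cons]
          exact hq
        have h4 := lt_of_le_of_lt h3 (lt_of_lt_of_le hlt h1)
        have h5 : i + 1 < 1 := by exact_mod_cast h4
        omega
      have h3 : ∀ q, ∃ p, pStar δ q u = some p := fun q => pStar_of_avoid δ t u q (h2 q)
      have h4 : ∀ q p, pStar δ q u = some p → s0 = Sum.inl (Sum.inl p) := by
        intro q p hp
        rw [← dStar_of_pStar δ t u q p hp]
        exact (hs (Sum.inr (Sum.inl q))).symm
      obtain ⟨p0, hp0⟩ := h3 t
      refine ⟨u, p0, fun q => ?_⟩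
      obtain ⟨p, hp⟩ := h3 q
      have := (h4 q p hp).symm.trans (h4 t p0 hp0)
      simp at this
      rw [hp, this]
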